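/- arXiv:2206.14234 — 2 statements merged into one kernel-verified Lean document; each statement's English description precedes it below -/
import Mathlib

section
/- The SPO+ loss is an upper bound on the unambiguous regret (and hence on the regret): for every ĉ ∈ ℝ^d, every true cost c ∈ ℝ^d, and every fixed w̄ ∈ W*(c), one has l_SPO+(ĉ, c) = −min_{w ∈ S}(2ĉ − c)ᵀw + 2ĉᵀw̄ − z*(c) ≥ max_{w ∈ W*(ĉ)} cᵀw − z*(c). -/
open scoped RealInnerProductSpace

/-- The optimal value `z*(c) = min_{w ∈ S} cᵀw` of the linear objective `c` over the
nonempty finite feasible set `S`. -/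
noncomputable def zstar {d : ℕ} (S : Finset (EuclideanSpace ℝ (Fin d)))
    (hS : S.Nonempty) (c : EuclideanSpace ℝ (Fin d)) : ℝ :=
  S.inf' hS fun w => ⟪c, w⟫

/-- The set of optimal solutions `W*(c) = {w ∈ S : cᵀw = z*(c)}`. -/
def Wstar {d : ℕ} (S : Finset (EuclideanSpace ℝ (Fin d)))
    (hS : S.Nonempty) (c : EuclideanSpace ℝ (Fin d)) : Set (EuclideanSpace ℝ (Fin d)) :=
  {w | w ∈ S ∧ ⟪c, w⟫ = zstar S hS c}

/-- The SPO+ loss `l_SPO+(ĉ, c) = −min_{w ∈ S}(2ĉ − c)ᵀw + 2 ĉᵀw̄ − z*(c)`, for a fixed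
optimal solution `w̄ ∈ W*(c)` of the true cost `c`. -/
noncomputable def lSPOplus {d : ℕ} (S : Finset (EuclideanSpace ℝ (Fin d))) (hS : S.Nonempty)
    (chat c wbar : EuclideanSpace ℝ (Fin d)) : ℝ :=
  -(S.inf' hS fun w => ⟪(2 : ℝ) • chat - c, w⟫) + 2 * ⟪chat, wbar⟫ - zstar S hS c

section Objectives

variable {ι : Type*} {S : Set ι} {v w : ι}

theorem le_two_nsmul_sub_of_isMinOn {G : Type*} [AddCommGroup G] [Preorder G]
    [AddLeftMono G] {f g : ι → G} {m : G}
    (hm : m ∈ lowerBounds ((fun u => 2 • f u - g u) '' S)) (hw : w ∈ S)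
    (hmin : IsMinOn f S w) (hv : v ∈ S) : g w ≤ 2 • f v - m := by
  calc
    g w ≤ 2 • f w - m := le_sub_comm.mp (hm ⟨w, hw, rfl⟩)
    _ ≤ 2 • f v - m := sub_le_sub_right (nsmul_le_nsmul_right (hmin hv) 2) m

-- Here `f` and `g` are the predicted and the true objective; `g v` stands in for `z*(c)`, with
-- which it agrees when `v` minimizes `g`.
theorem spoPlus_ge_unambiguous_regret_general {f g : ι → ℝ}
    (hfg : BddBelow ((fun u => 2 * f u - g u) '' S))
    (hf : {u ∈ S | IsMinOn f S u}.Nonempty) (hv : v ∈ S) :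
    -sInf ((fun u => 2 * f u - g u) '' S) + 2 * f v - g v ≥
      sSup (g '' {u ∈ S | IsMinOn f S u}) - g v := by
  simp only [two_mul, ← two_nsmul, neg_add_eq_sub] at hfg ⊢
  refine sub_le_sub_right (csSup_le (hf.image g) ?_) (g v)
  rintro _ ⟨w, ⟨hw, hmin⟩, rfl⟩
  exact le_two_nsmul_sub_of_isMinOn (fun _ => csInf_le hfg) hw hmin hv

end Objectives

section FiniteFeasibleSet

variable {d : ℕ} (S : Finset (EuclideanSpace ℝ (Fin d))) (hS : S.Nonempty)
  (c : EuclideanSpace ℝ (Fin d))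

theorem Wstar_eq_setOf_isMinOn :
    Wstar S hS c = {w ∈ (S : Set (EuclideanSpace ℝ (Fin d))) | IsMinOn (fun u => ⟪c, u⟫) S w} := by
  ext w
  refine and_congr_right fun hw => ?_
  calc
    ⟪c, w⟫ = zstar S hS c ↔ ⟪c, w⟫ ≤ zstar S hS c := (S.inf'_le _ hw).ge_iff_eq'.symm
    _ ↔ IsMinOn (fun u => ⟪c, u⟫) S w := S.le_inf'_iff hS _

theorem Wstar_nonempty : (Wstar S hS c).Nonempty := by
  obtain ⟨w, hw, hmin⟩ := S.exists_mem_eq_inf' hS fun w => ⟪c, w⟫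
  exact ⟨w, hw, hmin.symm⟩

theorem lSPOplus_eq_of_mem_Wstar {chat c wbar : EuclideanSpace ℝ (Fin d)}
    (hwbar : wbar ∈ Wstar S hS c) :
    lSPOplus S hS chat c wbar =
      -sInf ((fun w => 2 * ⟪chat, w⟫ - ⟪c, w⟫) '' S) + 2 * ⟪chat, wbar⟫ - ⟪c, wbar⟫ := by
  simp only [lSPOplus, Finset.inf'_eq_csInf_image, inner_sub_left, real_inner_smul_left, hwbar.2]

end FiniteFeasibleSet

/-- The SPO+ loss upper-bounds the unambiguous regret: for every `ĉ`, every true cost `c`, and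
every fixed `w̄ ∈ W*(c)`, `l_SPO+(ĉ, c) ≥ max_{w ∈ W*(ĉ)} cᵀw − z*(c)`. -/
theorem spoPlus_ge_unambiguous_regret {d : ℕ} (S : Finset (EuclideanSpace ℝ (Fin d)))
    (hS : S.Nonempty) (chat c wbar : EuclideanSpace ℝ (Fin d))
    (hwbar : wbar ∈ Wstar S hS c) :
    lSPOplus S hS chat c wbar ≥
      sSup ((fun w => ⟪c, w⟫) '' Wstar S hS chat) - zstar S hS c := by
  rw [lSPOplus_eq_of_mem_Wstar S hS hwbar, ← hwbar.2, Wstar_eq_setOf_isMinOn]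
  exact spoPlus_ge_unambiguous_regret_general (S.finite_toSet.image _).bddBelow
    (Wstar_eq_setOf_isMinOn S hS chat ▸ Wstar_nonempty S hS chat) hwbar.1
end

section
/- The vector 2(w̄ − w′) is a subgradient of the SPO+ loss at ĉ: for every ĉ ∈ ℝ^d, every w̄ ∈ W*(c), and every w′ ∈ W*(2ĉ − c), one has l_SPO+(c′, c) ≥ l_SPO+(ĉ, c) + ⟨2(w̄ − w′), c′ − ĉ⟩ for all c′ ∈ ℝ^d. -/
open scoped RealInnerProductSpace

/-! The map `x ↦ -min_{w ∈ S} ⟪x, w⟫` is a maximum of linear functions, and a linear function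
attaining the maximum at `x` contributes its slope `-w'` as a subgradient there. Precomposing with
`ĉ ↦ 2ĉ - c` doubles this slope, and the linear term `2⟪ĉ, w̄⟫` adds `2w̄`. -/

section Subgradient

variable {E : Type*} [SeminormedAddCommGroup E] [InnerProductSpace ℝ E]

/-- `g` is a subgradient of `f` at `x`, in the sense of convex analysis: the affine function with
slope `g` that agrees with `f` at `x` is a global minorant of `f`. Convexity of `f` is not part of
the definition. -/
def HasSubgradientAt (f : E → ℝ) (g x : E) : Prop :=
  ∀ y, f x + ⟪g, y - x⟫ ≤ f y

namespace HasSubgradientAt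

variable {f₁ f₂ f : E → ℝ} {g₁ g₂ g x : E}

theorem add (h₁ : HasSubgradientAt f₁ g₁ x) (h₂ : HasSubgradientAt f₂ g₂ x) :
    HasSubgradientAt (fun y => f₁ y + f₂ y) (g₁ + g₂) x := fun y => by
  rw [inner_add_left]
  linarith [h₁ y, h₂ y]

theorem sub_const (h : HasSubgradientAt f g x) (k : ℝ) :
    HasSubgradientAt (fun y => f y - k) g x := fun y => by
  linarith [h y]

theorem comp_smul_sub {r : ℝ} {c : E} (h : HasSubgradientAt f g (r • x - c)) :
    HasSubgradientAt (fun y => f (r • y - c)) (r • g) x := fun y =>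
  calc
    f (r • x - c) + ⟪r • g, y - x⟫ = f (r • x - c) + ⟪g, (r • y - c) - (r • x - c)⟫ := by
      rw [sub_sub_sub_cancel_right, ← smul_sub, real_inner_smul_left, real_inner_smul_right]
    _ ≤ f (r • y - c) := h (r • y - c)

end HasSubgradientAt

theorem hasSubgradientAt_const_mul_inner (r : ℝ) (w x : E) :
    HasSubgradientAt (fun y => r * ⟪y, w⟫) (r • w) x := fun y => by
  rw [real_inner_smul_left, real_inner_comm, inner_sub_left]
  linarith

theorem hasSubgradientAt_neg_inf'_inner {ι : Type*} {s : Finset ι} (hs : s.Nonempty)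
    {a : ι → E} {x : E} {i : ι} (hi : i ∈ s) (hmin : ⟪x, a i⟫ = s.inf' hs fun j => ⟪x, a j⟫) :
    HasSubgradientAt (fun y => -s.inf' hs fun j => ⟪y, a j⟫) (-a i) x := fun y =>
  calc
    -(s.inf' hs fun j => ⟪x, a j⟫) + ⟪-a i, y - x⟫ = -⟪y, a i⟫ := by
      rw [← hmin, inner_neg_left, inner_sub_right, real_inner_comm x, real_inner_comm y]
      ring
    _ ≤ -s.inf' hs fun j => ⟪y, a j⟫ := neg_le_neg (s.inf'_le (fun j => ⟪y, a j⟫) hi)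

theorem spoPlus_subgradient_general {S : Finset E} (hS : S.Nonempty) {chat c w' : E} (wbar : E)
    (hw' : w' ∈ S)
    (hmin : ⟪(2 : ℝ) • chat - c, w'⟫ = S.inf' hS fun w => ⟪(2 : ℝ) • chat - c, w⟫) :
    HasSubgradientAt
      (fun x => -(S.inf' hS fun w => ⟪(2 : ℝ) • x - c, w⟫) + 2 * ⟪x, wbar⟫ -
        S.inf' hS fun w => ⟪c, w⟫)
      ((2 : ℝ) • (wbar - w')) chat := by
  have hslope : (2 : ℝ) • (wbar - w') = (2 : ℝ) • (-w') + (2 : ℝ) • wbar := by module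
  have hmax := (hasSubgradientAt_neg_inf'_inner hS (a := fun w => w) hw' hmin).comp_smul_sub
  have hlin := hasSubgradientAt_const_mul_inner 2 wbar chat
  rw [hslope]
  exact (hmax.add hlin).sub_const _

end Subgradient

/-- The vector `2(w̄ − w′)` is a subgradient of the SPO+ loss at `ĉ`: for every `ĉ`,
every `w̄ ∈ W*(c)`, and every `w′ ∈ W*(2ĉ − c)`, one has
`l_SPO+(c′, c) ≥ l_SPO+(ĉ, c) + ⟨2(w̄ − w′), c′ − ĉ⟩` for all `c′`. -/
theorem spoPlus_subgradient {d : ℕ} (S : Finset (EuclideanSpace ℝ (Fin d))) (hS : S.Nonempty)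
    (chat c wbar w' : EuclideanSpace ℝ (Fin d)) (hwbar : wbar ∈ Wstar S hS c)
    (hw' : w' ∈ Wstar S hS ((2 : ℝ) • chat - c)) :
    ∀ c' : EuclideanSpace ℝ (Fin d),
      lSPOplus S hS c' c wbar ≥
        lSPOplus S hS chat c wbar + ⟪(2 : ℝ) • (wbar - w'), c' - chat⟫ :=
  spoPlus_subgradient_general hS wbar hw'.1 hw'.2
end
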